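/- arXiv:2306.11705 — 2 statements merged into one kernel-verified Lean document; each statement's English description precedes it below -/
import Mathlib

section
/- Let (f, g) be an (M, n, φ, Φ, λ) DI code for a K-MAC W with λ < 1/2 and M_k ≥ 1 for all k. Then for every sender k, (1/n) log₂ M_k ≤ max { H(p) : p ∈ P_n(X_k), ∑_{a ∈ X_k} p(a) φ_k(a) ≤ Φ_k } + (|X_k| log₂(n+1))/n, where the maximum is over n-types on X_k satisfying the expected cost constraint. -/
open scoped BigOperators

/-- A probability distribution on a finite alphabet, given as a function. -/
def IsDist {α : Type*} [Fintype α] (p : α → ℝ) : Prop :=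
  (∀ x, 0 ≤ p x) ∧ ∑ x, p x = 1

open Classical in
/-- Probability of an event under a distribution on a finite alphabet. -/
noncomputable def pr {α : Type*} [Fintype α] (p : α → ℝ) (A : α → Prop) : ℝ :=
  ∑ x, if A x then p x else 0

/-- Shannon entropy, base 2 (with the convention `0 * log 0 = 0`). -/
noncomputable def H2 {α : Type*} [Fintype α] (p : α → ℝ) : ℝ :=
  ∑ x, -(p x * Real.logb 2 (p x))

open Classical in
/-- The empirical distribution (type) of a sequence. -/
noncomputable def empDist {α : Type*} [Fintype α] {n : ℕ} (x : Fin n → α) (a : α) : ℝ :=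
  ((Finset.univ.filter fun i => x i = a).card : ℝ) / (n : ℝ)

/-- `p` is an `n`-type, i.e. the empirical distribution of some length-`n` sequence. -/
def IsNType {α : Type*} [Fintype α] (n : ℕ) (p : α → ℝ) : Prop :=
  ∃ x : Fin n → α, empDist x = p

/-- Memoryless extension of a point-to-point channel. -/
noncomputable def dmcExt {X Y : Type*} (V : X → Y → ℝ) (n : ℕ)
    (x : Fin n → X) (y : Fin n → Y) : ℝ :=
  ∏ i, V (x i) (y i)

/-- `(f, g)` is an `(M, n, lam)` deterministic-identification code for the
(block) channel `Vn`. -/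
def IsDICode {X Y : Type*} [Fintype X] [Fintype Y] {n M : ℕ}
    (Vn : (Fin n → X) → (Fin n → Y) → ℝ)
    (f : Fin M → Fin n → X) (g : Fin M → (Fin n → Y) → Bool) (lam : ℝ) : Prop :=
  (∀ m, pr (Vn (f m)) (fun y => g m y = false) ≤ lam) ∧
  (∀ m m', m ≠ m' → pr (Vn (f m)) (fun y => g m' y = true) ≤ lam)

/-- Rate `R` is DI-achievable over the DMC `V` under the cost constraint `(φ, Φ)`. -/
def dmcAchievable {X Y : Type*} [Fintype X] [Fintype Y]
    (V : X → Y → ℝ) (φ : X → ℝ) (Φ : ℝ) (R : ℝ) : Prop :=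
  0 ≤ R ∧ ∀ lam > (0 : ℝ), ∃ N : ℕ, ∀ n ≥ N,
    ∃ (f : Fin ⌈(2:ℝ) ^ ((n:ℝ) * R)⌉₊ → Fin n → X)
      (g : Fin ⌈(2:ℝ) ^ ((n:ℝ) * R)⌉₊ → (Fin n → Y) → Bool),
      (∀ m, (1 / (n:ℝ)) * ∑ i, φ (f m i) ≤ Φ) ∧ IsDICode (dmcExt V n) f g lam

/-- The DI capacity of a DMC under an input cost constraint. -/
noncomputable def CDIdmc {X Y : Type*} [Fintype X] [Fintype Y]
    (V : X → Y → ℝ) (φ : X → ℝ) (Φ : ℝ) : ℝ :=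
  sSup {R | dmcAchievable V φ Φ R}

/-! ### K-input multiple-access channels -/

/-- Memoryless extension of a `K`-MAC. -/
noncomputable def macExt {K : ℕ} {X : Fin K → Type*} {Y : Type*}
    (W : (∀ k, X k) → Y → ℝ) (n : ℕ)
    (x : ∀ k, Fin n → X k) (y : Fin n → Y) : ℝ :=
  ∏ i, W (fun k => x k i) (y i)

/-- The component error probability `e_k(m'|m)` of a MAC DI code. -/
noncomputable def macErr {K : ℕ} {X : Fin K → Type*} {Y : Type*} [Fintype Y]
    (W : (∀ k, X k) → Y → ℝ) (n : ℕ) {M : Fin K → ℕ}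
    (f : ∀ k, Fin (M k) → Fin n → X k)
    (g : (∀ k, Fin (M k)) → (Fin n → Y) → Fin K → Bool)
    (k : Fin K) (m' m : ∀ j, Fin (M j)) : ℝ :=
  pr (macExt W n (fun j => f j (m j))) (fun y => g m' y k ≠ decide (m' k = m k))

/-- The average input cost constraint of a MAC code. -/
def macCost {K : ℕ} {X : Fin K → Type*} (n : ℕ) {M : Fin K → ℕ}
    (f : ∀ k, Fin (M k) → Fin n → X k) (φ : ∀ k, X k → ℝ) (Φ : Fin K → ℝ) : Prop :=
  ∀ k, ∀ mk : Fin (M k), (1 / (n:ℝ)) * ∑ i, φ k (f k mk i) ≤ Φ k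

/-- `(f, g)` is an `(M, n, φ, Φ, lam)` (maximal-error) DI code for the `K`-MAC `W`. -/
def IsMACDICode {K : ℕ} {X : Fin K → Type*} {Y : Type*} [Fintype Y]
    (W : (∀ k, X k) → Y → ℝ) (n : ℕ) {M : Fin K → ℕ}
    (f : ∀ k, Fin (M k) → Fin n → X k)
    (g : (∀ k, Fin (M k)) → (Fin n → Y) → Fin K → Bool)
    (φ : ∀ k, X k → ℝ) (Φ : Fin K → ℝ) (lam : ℝ) : Prop :=
  macCost n f φ Φ ∧ ∀ k (m m' : ∀ j, Fin (M j)), macErr W n f g k m' m ≤ lam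

/-- A rate tuple is DI-achievable over the `K`-MAC `W` under cost constraints `(φ, Φ)`. -/
def macAchievable {K : ℕ} {X : Fin K → Type*} {Y : Type*} [Fintype Y]
    (W : (∀ k, X k) → Y → ℝ) (φ : ∀ k, X k → ℝ) (Φ : Fin K → ℝ)
    (R : Fin K → ℝ) : Prop :=
  (∀ k, 0 ≤ R k) ∧ ∀ lam > (0 : ℝ), ∃ N : ℕ, ∀ n ≥ N,
    ∃ (f : ∀ k, Fin ⌈(2:ℝ) ^ ((n:ℝ) * R k)⌉₊ → Fin n → X k)
      (g : (∀ k, Fin ⌈(2:ℝ) ^ ((n:ℝ) * R k)⌉₊) → (Fin n → Y) → Fin K → Bool),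
      IsMACDICode W n f g φ Φ lam

/-- The (maximal-error) DI capacity region of a `K`-MAC:
the closure of the set of achievable rate tuples. -/
def CDImac {K : ℕ} {X : Fin K → Type*} {Y : Type*} [Fintype Y]
    (W : (∀ k, X k) → Y → ℝ) (φ : ∀ k, X k → ℝ) (Φ : Fin K → ℝ) :
    Set (Fin K → ℝ) :=
  closure {R | macAchievable W φ Φ R}

open Classical in
/-- The average false-identification error probability `ē_k(m')` of a MAC code:
the average of `e_k(m'|m)` over `m` with `m_k` uniform on `[M_k] ∖ {m'_k}` and
`m_j` uniform on `[M_j]` for `j ≠ k`. -/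
noncomputable def macAvgErr {K : ℕ} {X : Fin K → Type*} {Y : Type*} [Fintype Y]
    (W : (∀ k, X k) → Y → ℝ) (n : ℕ) {M : Fin K → ℕ}
    (f : ∀ k, Fin (M k) → Fin n → X k)
    (g : (∀ k, Fin (M k)) → (Fin n → Y) → Fin K → Bool)
    (k : Fin K) (m' : ∀ j, Fin (M j)) : ℝ :=
  (∑ m ∈ Finset.univ.filter (fun m : ∀ j, Fin (M j) => m k ≠ m' k),
      macErr W n f g k m' m) /
    (((M k : ℝ) - 1) * ∏ j ∈ Finset.univ.erase k, (M j : ℝ))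

/-- `(f, g)` is an `(M, n, φ, Φ, lam)` average-error DI (DIA) code for the `K`-MAC `W`. -/
def IsMACDIACode {K : ℕ} {X : Fin K → Type*} {Y : Type*} [Fintype Y]
    (W : (∀ k, X k) → Y → ℝ) (n : ℕ) {M : Fin K → ℕ}
    (f : ∀ k, Fin (M k) → Fin n → X k)
    (g : (∀ k, Fin (M k)) → (Fin n → Y) → Fin K → Bool)
    (φ : ∀ k, X k → ℝ) (Φ : Fin K → ℝ) (lam : ℝ) : Prop :=
  macCost n f φ Φ ∧
  (∀ k (m : ∀ j, Fin (M j)), macErr W n f g k m m ≤ lam) ∧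
  (∀ k (m' : ∀ j, Fin (M j)), macAvgErr W n f g k m' ≤ lam)

open Classical in
/-- `(f, g)` is an `(M, n, φ, Φ, lam)` average-error DI (DIA) code for the DMC `V`. -/
def IsDMCDIACode {X Y : Type*} [Fintype X] [Fintype Y] {n M : ℕ}
    (V : X → Y → ℝ) (f : Fin M → Fin n → X) (g : Fin M → (Fin n → Y) → Bool)
    (φ : X → ℝ) (Φ lam : ℝ) : Prop :=
  (∀ m, (1 / (n:ℝ)) * ∑ i, φ (f m i) ≤ Φ) ∧
  (∀ m, pr (dmcExt V n (f m)) (fun y => g m y = false) ≤ lam) ∧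
  (∀ m' : Fin M, (∑ m ∈ Finset.univ.filter (fun m => m ≠ m'),
      pr (dmcExt V n (f m)) (fun y => g m' y = true)) / ((M : ℝ) - 1) ≤ lam)

/-! ### Joint distributions of `(X, X', S, Y)`, the set `Q`, and mutual information -/

section Joint

variable {A S Y : Type*} [Fintype A] [Fintype S] [Fintype Y]

noncomputable def margX (q : A × A × S × Y → ℝ) (a : A) : ℝ :=
  ∑ a', ∑ s, ∑ y, q (a, a', s, y)

noncomputable def margX' (q : A × A × S × Y → ℝ) (a' : A) : ℝ :=
  ∑ a, ∑ s, ∑ y, q (a, a', s, y)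

noncomputable def margS (q : A × A × S × Y → ℝ) (s : S) : ℝ :=
  ∑ a, ∑ a', ∑ y, q (a, a', s, y)

noncomputable def margXY (q : A × A × S × Y → ℝ) (a : A) (y : Y) : ℝ :=
  ∑ a', ∑ s, q (a, a', s, y)

noncomputable def margX'Y (q : A × A × S × Y → ℝ) (a' : A) (y : Y) : ℝ :=
  ∑ a, ∑ s, q (a, a', s, y)

noncomputable def margXX' (q : A × A × S × Y → ℝ) (a a' : A) : ℝ :=
  ∑ s, ∑ y, q (a, a', s, y)

noncomputable def margXX'Y (q : A × A × S × Y → ℝ) (a a' : A) (y : Y) : ℝ :=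
  ∑ s, q (a, a', s, y)

noncomputable def margXSY (q : A × A × S × Y → ℝ) : A × S × Y → ℝ :=
  fun t => ∑ a', q (t.1, a', t.2.1, t.2.2)

noncomputable def margXX'S (q : A × A × S × Y → ℝ) : A × A × S → ℝ :=
  fun t => ∑ y, q (t.1, t.2.1, t.2.2, y)

noncomputable def margX'SY (q : A × A × S × Y → ℝ) : A × S × Y → ℝ :=
  fun t => ∑ a, q (a, t.1, t.2.1, t.2.2)

noncomputable def margX'S (q : A × A × S × Y → ℝ) : A × S → ℝ :=
  fun t => ∑ a, ∑ y, q (a, t.1, t.2, y)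

/-- The mutual information `I(X'; X, S, Y)` of a joint distribution of `(X, X', S, Y)`. -/
noncomputable def infoX' (q : A × A × S × Y → ℝ) : ℝ :=
  H2 (margX' q) + H2 (margXSY q) - H2 q

/-- The conditional mutual information `I(X; Y | X', S)`. -/
noncomputable def condMIXY (q : A × A × S × Y → ℝ) : ℝ :=
  H2 (margXX'S q) + H2 (margX'SY q) - H2 q - H2 (margX'S q)

/-- The set `Q(P, P_S, W)` of joint distributions of `(X, X', S, Y)` such that the
`S`-marginal lies in `P_S`, `p_{Y|X} = p_S W`, `p_{Y|X'} = p_{S'} W` for some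
`p_{S'} ∈ P_S`, both `X`- and `X'`-marginals equal `P`, and `X − X' − Y` is a
Markov chain. -/
def QSet (P : A → ℝ) (PS : Set (S → ℝ)) (W : A → S → Y → ℝ) :
    Set (A × A × S × Y → ℝ) :=
  { q | IsDist q ∧ margS q ∈ PS ∧
    (∀ a y, margXY q a y = margX q a * ∑ s, margS q s * W a s y) ∧
    (∃ pS' ∈ PS, ∀ a y, margX'Y q a y = margX' q a * ∑ s, pS' s * W a s y) ∧
    margX q = P ∧ margX' q = P ∧
    (∀ a a' y, margXX'Y q a a' y * margX' q a' = margXX' q a a' * margX'Y q a' y) }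

/-- The set `Q_δ(P, P_S, W)`: as `QSet`, but with the Markov-chain condition replaced by
`I(X; Y | X', S) ≤ δ`. -/
def QdSet (P : A → ℝ) (PS : Set (S → ℝ)) (W : A → S → Y → ℝ) (δ : ℝ) :
    Set (A × A × S × Y → ℝ) :=
  { q | IsDist q ∧ margS q ∈ PS ∧
    (∀ a y, margXY q a y = margX q a * ∑ s, margS q s * W a s y) ∧
    (∃ pS' ∈ PS, ∀ a y, margX'Y q a y = margX' q a * ∑ s, pS' s * W a s y) ∧
    margX q = P ∧ margX' q = P ∧
    condMIXY q ≤ δ }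

/-- `min_{q ∈ Qs} I(X'; X, S, Y)`. -/
noncomputable def minInfoX' (Qs : Set (A × A × S × Y → ℝ)) : ℝ :=
  sInf (infoX' '' Qs)

end Joint

/-! ### Viewing one sender of a `K`-MAC as input, the others as state -/

/-- Combine an input `a : X k` with inputs of all other senders into a full input tuple. -/
def insertAt {K : ℕ} {X : Fin K → Type*} (k : Fin K) (a : X k)
    (s : ∀ j : {j : Fin K // j ≠ k}, X j.val) (j : Fin K) : X j :=
  if h : j = k then cast (congrArg X h).symm a else s ⟨j, h⟩

/-- Marginal distribution of the `k`-th component. -/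
noncomputable def margKth {K : ℕ} {X : Fin K → Type*} [∀ k, Fintype (X k)]
    (p : (∀ k, X k) → ℝ) (k : Fin K) (a : X k) : ℝ :=
  ∑ s : ∀ j : {j : Fin K // j ≠ k}, X j.val, p (insertAt k a s)

/-- Marginal distribution of all components except the `k`-th, i.e. of `S_k`. -/
noncomputable def margRest {K : ℕ} {X : Fin K → Type*} [∀ k, Fintype (X k)]
    (p : (∀ k, X k) → ℝ) (k : Fin K)
    (s : ∀ j : {j : Fin K // j ≠ k}, X j.val) : ℝ :=
  ∑ a : X k, p (insertAt k a s)

/-- The `K`-MAC viewed as a point-to-point channel with input `X k` and state `S_k`. -/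
def partialW {K : ℕ} {X : Fin K → Type*} {Y : Type*}
    (W : (∀ k, X k) → Y → ℝ) (k : Fin K) (a : X k)
    (s : ∀ j : {j : Fin K // j ≠ k}, X j.val) (y : Y) : ℝ :=
  W (insertAt k a s) y

/-- Mutual information `I(X, S; X')` of a joint distribution on `X × X × S`. -/
noncomputable def miXSX' {X S : Type*} [Fintype X] [Fintype S]
    (pj : X × X × S → ℝ) : ℝ :=
  H2 (fun t : X × S => ∑ a', pj (t.1, a', t.2)) +
    H2 (fun a' : X => ∑ a, ∑ s, pj (a, a', s)) - H2 pj

/-! ### Converse by the method of types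

If two messages of sender `k` shared a codeword, the receiver would have to both accept and reject
on one and the same output distribution, so two errors would add up to `1`, against `2 * lam < 1`.
Encoders are therefore injective. Under the i.i.d. law `p ^ n` each sequence of type `p` has
probability `2 ^ (-n * H(p))`, so a type class has at most `2 ^ (n * H(p))` elements, and there are
at most `(n + 1) ^ |X k|` types.
-/

section Types

variable {α : Type*} [Fintype α] {n : ℕ}

open Classical in
/-- The finite set `P_n(α)` of `n`-types on `α`, used to count types and to sort codewords by
type. -/
noncomputable def nTypes (α : Type*) [Fintype α] (n : ℕ) : Finset (α → ℝ) :=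
  Finset.univ.image (empDist : (Fin n → α) → α → ℝ)

open Classical in
/-- The type class of `p`: the sequences of length `n` whose type is `p`. It is empty unless `p` is
an `n`-type. -/
noncomputable def typeClass (n : ℕ) (p : α → ℝ) : Finset (Fin n → α) :=
  {x | empDist x = p}

/-- The maximal entropy of an `n`-type of expected cost at most `Φ`, the leading term of the
converse bound. As a supremum of reals it is `0` if no type meets the constraint. -/
noncomputable def maxTypeEntropy (n : ℕ) (φ : α → ℝ) (Φ : ℝ) : ℝ :=
  sSup {c : ℝ | ∃ p : α → ℝ, IsNType n p ∧ (∑ a, p a * φ a ≤ Φ) ∧ c = H2 p}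

@[simp]
lemma mem_nTypes {p : α → ℝ} : p ∈ nTypes α n ↔ IsNType n p := by
  simp only [nTypes, Finset.mem_image, Finset.mem_univ, true_and, IsNType]

@[simp]
lemma mem_typeClass {p : α → ℝ} {x : Fin n → α} : x ∈ typeClass n p ↔ empDist x = p := by
  simp only [typeClass, Finset.mem_filter_univ]

lemma empDist_nonneg (x : Fin n → α) (a : α) : 0 ≤ empDist x a := by
  unfold empDist
  positivity

lemma empDist_le_one (x : Fin n → α) (a : α) : empDist x a ≤ 1 := by
  classical
  refine div_le_one_of_le₀ ?_ n.cast_nonneg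
  exact_mod_cast (Finset.card_filter_le _ _).trans_eq (Finset.card_fin n)

lemma empDist_apply_self_pos (x : Fin n → α) (i : Fin n) : 0 < empDist x (x i) := by
  classical
  have hn : 0 < n := i.pos
  have hcount : 0 < (Finset.univ.filter fun j => x j = x i).card :=
    Finset.card_pos.mpr ⟨i, by simp⟩
  unfold empDist
  positivity

lemma sum_empDist_mul (x : Fin n → α) (F : α → ℝ) :
    ∑ a, empDist x a * F a = (∑ i, F (x i)) / n := by
  classical
  simp only [empDist, div_mul_eq_mul_div, ← Finset.sum_div, ← Finset.sum_fiberwise' _ x F,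
    Finset.sum_const, nsmul_eq_mul]

lemma sum_empDist_pow (x : Fin n → α) : (∑ a, empDist x a) ^ n = 1 := by
  rcases eq_or_ne n 0 with rfl | hn
  · exact pow_zero _
  · have hsum : ∑ a, empDist x a = 1 := by
      simpa [hn] using sum_empDist_mul x fun _ => 1
    rw [hsum, one_pow]

lemma natCast_mul_H2_empDist (x : Fin n → α) :
    n * H2 (empDist x) = -∑ i, Real.logb 2 (empDist x (x i)) := by
  rw [H2, Finset.sum_neg_distrib, sum_empDist_mul x fun a => Real.logb 2 (empDist x a), mul_neg,
    mul_div_cancel_of_imp']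
  intro hn
  obtain rfl : n = 0 := by exact_mod_cast hn
  exact Fin.sum_univ_zero _

lemma prod_empDist_apply_self (x : Fin n → α) :
    ∏ i, empDist x (x i) = (2 : ℝ) ^ (-(n * H2 (empDist x))) := by
  have hpos : 0 < ∏ i, empDist x (x i) := Finset.prod_pos fun i _ => empDist_apply_self_pos x i
  rw [natCast_mul_H2_empDist, neg_neg,
    ← Real.logb_prod _ _ fun i _ => (empDist_apply_self_pos x i).ne',
    Real.rpow_logb two_pos (by norm_num) hpos]

lemma card_typeClass_empDist_le (x : Fin n → α) :
    ((typeClass n (empDist x)).card : ℝ) ≤ 2 ^ (n * H2 (empDist x)) := by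
  have hpos : (0 : ℝ) < 2 ^ (n * H2 (empDist x)) := by positivity
  rw [← div_le_one hpos, div_eq_mul_inv, ← Real.rpow_neg two_pos.le]
  calc ((typeClass n (empDist x)).card : ℝ) * 2 ^ (-(n * H2 (empDist x)))
      = ∑ y ∈ typeClass n (empDist x), ∏ i, empDist x (y i) := by
        rw [← nsmul_eq_mul, ← Finset.sum_const]
        refine Finset.sum_congr rfl fun y hy => ?_
        rw [← mem_typeClass.mp hy, prod_empDist_apply_self]
    _ ≤ ∑ y : Fin n → α, ∏ i, empDist x (y i) :=
        Finset.sum_le_univ_sum_of_nonneg fun y =>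
          Finset.prod_nonneg fun i _ => empDist_nonneg x (y i)
    _ = 1 := by rw [← Fintype.sum_pow, sum_empDist_pow]

lemma card_nTypes_le : (nTypes α n).card ≤ (n + 1) ^ Fintype.card α := by
  classical
  let ofCounts (c : α → Fin (n + 1)) (a : α) : ℝ := (c a : ℕ) / n
  have hsub : nTypes α n ⊆ Finset.univ.image ofCounts := by
    intro p hp
    obtain ⟨x, rfl⟩ := mem_nTypes.mp hp
    have hcount (a : α) : (Finset.univ.filter fun i => x i = a).card < n + 1 :=
      Nat.lt_succ_of_le ((Finset.card_filter_le _ _).trans_eq (Finset.card_fin n))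
    refine Finset.mem_image.mpr ⟨fun a => ⟨_, hcount a⟩, Finset.mem_univ _, ?_⟩
    funext a
    simp only [ofCounts, empDist]
  calc (nTypes α n).card ≤ (Finset.univ.image ofCounts).card := Finset.card_le_card hsub
    _ ≤ (Finset.univ : Finset (α → Fin (n + 1))).card := Finset.card_image_le
    _ = (n + 1) ^ Fintype.card α := by simp

lemma card_le_of_H2_empDist_le {s : Finset (Fin n → α)} {h : ℝ}
    (hs : ∀ x ∈ s, H2 (empDist x) ≤ h) :
    (s.card : ℝ) ≤ (n + 1) ^ Fintype.card α * 2 ^ (n * h) := by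
  classical
  have hfiber (p : α → ℝ) : ((s.filter fun x => empDist x = p).card : ℝ) ≤ 2 ^ (n * h) := by
    rcases (s.filter fun x => empDist x = p).eq_empty_or_nonempty with hempty | ⟨x, hx⟩
    · rw [hempty, Finset.card_empty, Nat.cast_zero]
      positivity
    · obtain ⟨hxs, rfl⟩ := Finset.mem_filter.mp hx
      calc ((s.filter fun y => empDist y = empDist x).card : ℝ)
          ≤ (typeClass n (empDist x)).card := by
            exact_mod_cast Finset.card_le_card fun y hy =>
              mem_typeClass.mpr (Finset.mem_filter.mp hy).2
        _ ≤ 2 ^ (n * H2 (empDist x)) := card_typeClass_empDist_le x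
        _ ≤ 2 ^ (n * h) :=
            Real.rpow_le_rpow_of_exponent_le one_le_two
              (mul_le_mul_of_nonneg_left (hs x hxs) n.cast_nonneg)
  have htypes : (s : Set (Fin n → α)).MapsTo empDist (nTypes α n : Set (α → ℝ)) :=
    fun x _ => mem_nTypes.mpr ⟨x, rfl⟩
  calc (s.card : ℝ)
      = ∑ p ∈ nTypes α n, ((s.filter fun x => empDist x = p).card : ℝ) := by
        exact_mod_cast Finset.card_eq_sum_card_fiberwise htypes
    _ ≤ (nTypes α n).card * 2 ^ (n * h) := by
        rw [← nsmul_eq_mul]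
        exact Finset.sum_le_card_nsmul _ _ _ fun p _ => hfiber p
    _ ≤ (n + 1) ^ Fintype.card α * 2 ^ (n * h) := by
        gcongr
        exact_mod_cast card_nTypes_le

lemma H2_nonneg {p : α → ℝ} (hp : ∀ a, p a ∈ Set.Icc 0 1) : 0 ≤ H2 p :=
  Finset.sum_nonneg fun a _ => neg_nonneg.mpr <|
    mul_nonpos_of_nonneg_of_nonpos (hp a).1 (Real.logb_nonpos one_lt_two (hp a).1 (hp a).2)

lemma maxTypeEntropy_nonneg (n : ℕ) (φ : α → ℝ) (Φ : ℝ) : 0 ≤ maxTypeEntropy n φ Φ := by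
  refine Real.sSup_nonneg ?_
  rintro _ ⟨_, ⟨x, rfl⟩, -, rfl⟩
  exact H2_nonneg fun a => ⟨empDist_nonneg x a, empDist_le_one x a⟩

lemma H2_empDist_le_maxTypeEntropy {φ : α → ℝ} {Φ : ℝ} {x : Fin n → α}
    (hx : (1 / (n : ℝ)) * ∑ i, φ (x i) ≤ Φ) : H2 (empDist x) ≤ maxTypeEntropy n φ Φ := by
  have hbdd : BddAbove (H2 '' (nTypes α n : Set (α → ℝ))) :=
    ((nTypes α n).finite_toSet.image H2).bddAbove
  refine le_csSup (hbdd.mono ?_) ⟨_, ⟨x, rfl⟩, ?_, rfl⟩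
  · rintro _ ⟨p, hp, -, rfl⟩
    exact Set.mem_image_of_mem H2 (mem_nTypes.mpr hp)
  · rwa [sum_empDist_mul, ← one_div_mul_eq_div]

lemma logb_card_div_le_maxTypeEntropy {s : Finset (Fin n → α)} (hs : s.Nonempty)
    {φ : α → ℝ} {Φ : ℝ} (hcost : ∀ x ∈ s, (1 / (n : ℝ)) * ∑ i, φ (x i) ≤ Φ) :
    (1 / (n : ℝ)) * Real.logb 2 s.card ≤
      maxTypeEntropy n φ Φ + Fintype.card α * Real.logb 2 ((n : ℝ) + 1) / n := by
  set h := maxTypeEntropy n φ Φ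
  have hcard : (s.card : ℝ) ≤ (n + 1) ^ Fintype.card α * 2 ^ (n * h) :=
    card_le_of_H2_empDist_le fun x hx => H2_empDist_le_maxTypeEntropy (hcost x hx)
  have hlog : Real.logb 2 s.card ≤ Fintype.card α * Real.logb 2 ((n : ℝ) + 1) + n * h := by
    refine (Real.logb_le_logb_of_le one_lt_two (by exact_mod_cast hs.card_pos) hcard).trans_eq ?_
    rw [Real.logb_mul (by positivity) (by positivity), Real.logb_pow,
      Real.logb_rpow two_pos (by norm_num)]
  have hcancel : n * h / n ≤ h :=
    div_le_of_le_mul₀ n.cast_nonneg (maxTypeEntropy_nonneg n φ Φ) (mul_comm _ _).le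
  calc (1 / (n : ℝ)) * Real.logb 2 s.card
      = Real.logb 2 s.card / n := one_div_mul_eq_div _ _
    _ ≤ (Fintype.card α * Real.logb 2 ((n : ℝ) + 1) + n * h) / n := by gcongr
    _ = n * h / n + Fintype.card α * Real.logb 2 ((n : ℝ) + 1) / n := by rw [add_div, add_comm]
    _ ≤ h + Fintype.card α * Real.logb 2 ((n : ℝ) + 1) / n := by gcongr

end Types

lemma pr_not_add_pr {α : Type*} [Fintype α] (p : α → ℝ) (A : α → Prop) :
    pr p (fun x => ¬A x) + pr p A = ∑ x, p x := by
  rw [pr, pr, ← Finset.sum_add_distrib]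
  refine Finset.sum_congr rfl fun x _ => ?_
  by_cases hx : A x <;> simp [hx]

section Encoders

variable {K : ℕ} {X : Fin K → Type*} {Y : Type*} [Fintype Y] {W : (∀ k, X k) → Y → ℝ} {n : ℕ}
  {M : Fin K → ℕ} {f : ∀ k, Fin (M k) → Fin n → X k}
  {g : (∀ k, Fin (M k)) → (Fin n → Y) → Fin K → Bool} {k : Fin K}

lemma sum_macExt (hW : ∀ x, ∑ y, W x y = 1) (x : ∀ k, Fin n → X k) :
    ∑ y, macExt W n x y = 1 := by
  classical
  simp only [macExt, ← Fintype.prod_sum, hW, Finset.prod_const_one]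

lemma macErr_add_macErr_self_eq_one (hW : ∀ x, ∑ y, W x y = 1) {m m' : ∀ j, Fin (M j)}
    (hk : m' k ≠ m k) (hf : ∀ j, f j (m j) = f j (m' j)) :
    macErr W n f g k m' m + macErr W n f g k m' m' = 1 := by
  have hsum := pr_not_add_pr (macExt W n fun j => f j (m' j)) fun y => g m' y k = false
  rw [sum_macExt hW] at hsum
  simpa only [macErr, hf, hk, decide_true, decide_false, ne_eq, Bool.not_eq_true] using hsum

lemma encoder_injective_of_macErr_le (hW : ∀ x, ∑ y, W x y = 1) (hM : ∀ j, 1 ≤ M j) {lam : ℝ}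
    (hlam : lam < 1 / 2) (herr : ∀ m m', macErr W n f g k m' m ≤ lam) :
    Function.Injective (f k) := by
  intro a b hab
  by_contra hne
  let base (j : Fin K) : Fin (M j) := ⟨0, hM j⟩
  have hk : Function.update base k b k ≠ Function.update base k a k := by
    simpa using Ne.symm hne
  have hf (j : Fin K) : f j (Function.update base k a j) = f j (Function.update base k b j) := by
    rcases eq_or_ne j k with rfl | hj
    · simpa using hab
    · simp [hj]
  have hone := macErr_add_macErr_self_eq_one (g := g) hW hk hf
  linarith [herr (Function.update base k a) (Function.update base k b),
    herr (Function.update base k b) (Function.update base k b)]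

theorem mac_DI_rate_upper_bound_general [∀ k, Fintype (X k)] (hW : ∀ x, IsDist (W x))
    (hM : ∀ k, 1 ≤ M k) {φ : ∀ k, X k → ℝ} {Φ : Fin K → ℝ} {lam : ℝ} (hlam : lam < 1 / 2)
    (hcode : IsMACDICode W n f g φ Φ lam) (k : Fin K) :
    (1 / (n : ℝ)) * Real.logb 2 (M k) ≤
      maxTypeEntropy n (φ k) (Φ k) +
        (Fintype.card (X k) : ℝ) * Real.logb 2 ((n : ℝ) + 1) / (n : ℝ) := by
  classical
  obtain ⟨hcost, herr⟩ := hcode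
  have hinj : Function.Injective (f k) :=
    encoder_injective_of_macErr_le (fun x => (hW x).2) hM hlam (herr k)
  let codebook : Finset (Fin n → X k) := Finset.univ.image (f k)
  have hcard : codebook.card = M k := by
    rw [Finset.card_image_of_injective _ hinj, Finset.card_fin]
  have hne : codebook.Nonempty := Finset.card_pos.mp (hcard ▸ hM k)
  have hcodebook : ∀ x ∈ codebook, (1 / (n : ℝ)) * ∑ i, φ k (x i) ≤ Φ k :=
    Finset.forall_mem_image.mpr fun m _ => hcost k m
  simpa only [hcard] using logb_card_div_le_maxTypeEntropy hne hcodebook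

end Encoders

/-- Converse counting bound: for any `(M, n, φ, Φ, λ)` DI code with
`λ < 1/2`, each rate `(1/n) log₂ M_k` is bounded by the maximal entropy of an `n`-type
satisfying the expected-cost constraint, plus `|X_k| log₂(n+1) / n`. -/
theorem mac_DI_rate_upper_bound
    {K : ℕ} {X : Fin K → Type} [∀ k, Fintype (X k)] {Y : Type} [Fintype Y]
    (W : (∀ k, X k) → Y → ℝ) (hW : ∀ x, IsDist (W x))
    (n : ℕ) (M : Fin K → ℕ) (hM : ∀ k, 1 ≤ M k)
    (f : ∀ k, Fin (M k) → Fin n → X k)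
    (g : (∀ k, Fin (M k)) → (Fin n → Y) → Fin K → Bool)
    (φ : ∀ k, X k → ℝ) (hφ : ∀ k x, 0 ≤ φ k x)
    (Φ : Fin K → ℝ) (hΦ : ∀ k, 0 ≤ Φ k)
    (lam : ℝ) (hlam : lam < 1/2)
    (hcode : IsMACDICode W n f g φ Φ lam) (k : Fin K) :
    (1 / (n:ℝ)) * Real.logb 2 (M k) ≤
      sSup { c : ℝ | ∃ p : X k → ℝ, IsNType n p ∧ (∑ a, p a * φ k a ≤ Φ k) ∧ c = H2 p }
      + (Fintype.card (X k) : ℝ) * Real.logb 2 ((n:ℝ) + 1) / (n : ℝ) :=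
  mac_DI_rate_upper_bound_general hW hM hlam hcode k
end

section
/- Let W : X×S → P(Y) be a channel with finite alphabets, P a distribution on X, and P_S a finite set of distributions on S. For δ ≥ 0 let Q_δ(P, P_S, W) be the set of joint distributions of (X, X′, S, Y) on X×X×S×Y such that the marginal p_S of S lies in P_S, p_{Y|X} = p_S W, there exists p_{S′} ∈ P_S with p_{Y|X′} = p_{S′} W, the marginals of X and X′ both equal P, and I(X; Y | X′, S) ≤ δ. Then (i) Q_δ is nonincreasing in δ and ⋂_{δ>0} Q_δ(P, P_S, W) = Q_0(P, P_S, W), and (ii) if 0 < R < min_{p ∈ Q_0(P, P_S, W)} I(X′; X, S, Y), then there exist α > 0 and δ > 0 such that R < min_{p ∈ Q_δ(P, P_S, W)} I(X′; X, S, Y) − α. -/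
open scoped BigOperators

/-!
For fixed `P`, `P_S`, `W`, the sets `Q_δ` are the sublevel sets of the continuous function
`I(X; Y | X', S)` on one fixed compact set of joint distributions. Hence they are compact, and they
decrease to `Q_0` as `δ ↓ 0`. If `R < min_{Q_0} I(X'; X, S, Y)`, the open set
`{R < I(X'; X, S, Y)}` contains `Q_0`, so by compactness it contains some `Q_δ` with `δ > 0`,
on which the minimum is attained.
-/

theorem exists_lt_sInf_image_of_directed {X ι β : Type*} [TopologicalSpace X] [T2Space X]
    [Nonempty ι] [ConditionallyCompleteLinearOrder β] {V : ι → Set X} (hV : Directed (· ⊇ ·) V)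
    (hV_compact : ∀ i, IsCompact (V i)) (hV_nonempty : (⋂ i, V i).Nonempty) {f : X → β}
    (hf : LowerSemicontinuous f) {r : β} (hr : r < sInf (f '' ⋂ i, V i)) :
    ∃ i, r < sInf (f '' V i) := by
  let i₀ := Classical.arbitrary ι
  have : Nonempty β := ⟨r⟩
  have hbdd : BddBelow (f '' ⋂ i, V i) :=
    ((hf.lowerSemicontinuousOn _).bddBelow_of_isCompact (hV_compact i₀)).mono
      (Set.image_mono (Set.iInter_subset V i₀))
  have lt_of_mem_iInter : ∀ x ∈ ⋂ i, V i, r < f x := fun x hx =>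
    hr.trans_le (csInf_le hbdd (Set.mem_image_of_mem f hx))
  obtain ⟨i, hi⟩ : ∃ i, V i ⊆ f ⁻¹' Set.Ioi r :=
    exists_subset_nhds_of_isCompact hV hV_compact fun x hx =>
      (hf.isOpen_preimage r).mem_nhds (lt_of_mem_iInter x hx)
  obtain ⟨x, hx, hmin⟩ := LowerSemicontinuousOn.exists_isMinOn
    (hV_nonempty.mono (Set.iInter_subset V i)) (hV_compact i) (hf.lowerSemicontinuousOn _)
  refine ⟨i, (hi hx).trans_le ?_⟩
  exact le_csInf ⟨f x, Set.mem_image_of_mem f hx⟩ (Set.forall_mem_image.2 hmin)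

theorem H2_eq_sum_negMulLog_div {α : Type*} [Fintype α] (p : α → ℝ) :
    H2 p = (∑ x, Real.negMulLog (p x)) / Real.log 2 := by
  simp only [H2, Real.logb, Real.negMulLog, Finset.sum_div, neg_mul, neg_div, mul_div_assoc]

@[fun_prop]
theorem continuous_H2 {α : Type*} [Fintype α] : Continuous (H2 : (α → ℝ) → ℝ) := by
  simp only [funext H2_eq_sum_negMulLog_div]
  fun_prop

section JointDistributions

variable {A S Y : Type*}

@[fun_prop]
theorem continuous_margX [Fintype A] [Fintype S] [Fintype Y] :
    Continuous (margX : (A × A × S × Y → ℝ) → A → ℝ) := by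
  unfold margX; fun_prop

@[fun_prop]
theorem continuous_margX' [Fintype A] [Fintype S] [Fintype Y] :
    Continuous (margX' : (A × A × S × Y → ℝ) → A → ℝ) := by
  unfold margX'; fun_prop

@[fun_prop]
theorem continuous_margS [Fintype A] [Fintype Y] :
    Continuous (margS : (A × A × S × Y → ℝ) → S → ℝ) := by
  unfold margS; fun_prop

@[fun_prop]
theorem continuous_margXY [Fintype A] [Fintype S] :
    Continuous (margXY : (A × A × S × Y → ℝ) → A → Y → ℝ) := by
  unfold margXY; fun_prop

@[fun_prop]
theorem continuous_margX'Y [Fintype A] [Fintype S] :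
    Continuous (margX'Y : (A × A × S × Y → ℝ) → A → Y → ℝ) := by
  unfold margX'Y; fun_prop

@[fun_prop]
theorem continuous_margXSY [Fintype A] :
    Continuous (margXSY : (A × A × S × Y → ℝ) → A × S × Y → ℝ) := by
  unfold margXSY; fun_prop

@[fun_prop]
theorem continuous_margXX'S [Fintype Y] :
    Continuous (margXX'S : (A × A × S × Y → ℝ) → A × A × S → ℝ) := by
  unfold margXX'S; fun_prop

@[fun_prop]
theorem continuous_margX'SY [Fintype A] :
    Continuous (margX'SY : (A × A × S × Y → ℝ) → A × S × Y → ℝ) := by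
  unfold margX'SY; fun_prop

@[fun_prop]
theorem continuous_margX'S [Fintype A] [Fintype Y] :
    Continuous (margX'S : (A × A × S × Y → ℝ) → A × S → ℝ) := by
  unfold margX'S; fun_prop

variable [Fintype A] [Fintype S] [Fintype Y]

theorem continuous_infoX' : Continuous (infoX' : (A × A × S × Y → ℝ) → ℝ) := by
  unfold infoX'; fun_prop

theorem continuous_condMIXY : Continuous (condMIXY : (A × A × S × Y → ℝ) → ℝ) := by
  unfold condMIXY; fun_prop

theorem nonempty_of_minInfoX'_pos {Q : Set (A × A × S × Y → ℝ)} (hQ : 0 < minInfoX' Q) :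
    Q.Nonempty := by
  rw [Set.nonempty_iff_ne_empty]
  rintro rfl
  simp only [minInfoX', Set.image_empty, Real.sInf_empty, lt_irrefl] at hQ

/-- The joint distributions of `(X, X', S, Y)` that satisfy every requirement in the definition of
`Q_δ(P, P_S, W)` except the bound on `I(X; Y | X', S)`; the sets `Q_δ` are the sublevel
sets of `I(X; Y | X', S)` in this set. -/
def compatibleSet (P : A → ℝ) (PS : Set (S → ℝ)) (W : A → S → Y → ℝ) :
    Set (A × A × S × Y → ℝ) :=
  { q | IsDist q ∧ margS q ∈ PS ∧
    (∀ a y, margXY q a y = margX q a * ∑ s, margS q s * W a s y) ∧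
    (∃ pS' ∈ PS, ∀ a y, margX'Y q a y = margX' q a * ∑ s, pS' s * W a s y) ∧
    margX q = P ∧ margX' q = P }

variable {P : A → ℝ} {PS : Set (S → ℝ)} {W : A → S → Y → ℝ}

theorem mem_QdSet_iff {δ : ℝ} {q : A × A × S × Y → ℝ} :
    q ∈ QdSet P PS W δ ↔ q ∈ compatibleSet P PS W ∧ condMIXY q ≤ δ := by
  simp only [QdSet, compatibleSet, Set.mem_ofPred_eq, and_assoc]

theorem QdSet_mono : Monotone (QdSet P PS W) := fun _ _ hδ _ hq =>
  mem_QdSet_iff.2 ((mem_QdSet_iff.1 hq).imp_right hδ.trans')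

theorem biInter_Ioi_QdSet (δ₀ : ℝ) :
    ⋂ δ ∈ Set.Ioi δ₀, QdSet P PS W δ = QdSet P PS W δ₀ := by
  refine Set.Subset.antisymm (fun q hq => ?_) (Set.subset_iInter₂ fun δ hδ => QdSet_mono hδ.le)
  have hq : ∀ δ > δ₀, q ∈ compatibleSet P PS W ∧ condMIXY q ≤ δ := fun δ hδ =>
    mem_QdSet_iff.1 (Set.mem_iInter₂.1 hq δ hδ)
  exact mem_QdSet_iff.2 ⟨(hq (δ₀ + 1) (lt_add_one δ₀)).1,
    le_of_forall_gt_imp_ge_of_dense fun δ hδ => (hq δ hδ).2⟩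

theorem isCompact_compatibleSet (hPS : IsCompact PS) : IsCompact (compatibleSet P PS W) := by
  -- Projecting out the witness `p_{S'}`, which ranges over a compact set, preserves compactness.
  let C : Set ((A × A × S × Y → ℝ) × (S → ℝ)) :=
    {z | margS z.1 ∈ PS ∧
      (margXY z.1 = fun a y => margX z.1 a * ∑ s, margS z.1 s * W a s y) ∧
      (margX'Y z.1 = fun a y => margX' z.1 a * ∑ s, z.2 s * W a s y) ∧
      margX z.1 = P ∧ margX' z.1 = P}
  have hC : IsClosed C := by
    refine .and (hPS.isClosed.preimage (by fun_prop)) (.and ?_ (.and ?_ (.and ?_ ?_))) <;>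
      exact isClosed_eq (by fun_prop) (by fun_prop)
  have hproj : compatibleSet P PS W = Prod.fst '' (stdSimplex ℝ (A × A × S × Y) ×ˢ PS ∩ C) := by
    ext q
    constructor
    · rintro ⟨hq, hS, hY, ⟨pS', hpS', hY'⟩, hX, hX'⟩
      exact ⟨(q, pS'), ⟨⟨hq, hpS'⟩, hS, funext₂ hY, funext₂ hY', hX, hX'⟩, rfl⟩
    · rintro ⟨⟨q, pS'⟩, ⟨⟨hq, hpS'⟩, hS, hY, hY', hX, hX'⟩, rfl⟩
      exact ⟨hq, hS, congrFun₂ hY, ⟨pS', hpS', congrFun₂ hY'⟩, hX, hX'⟩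
  rw [hproj]
  exact (((isCompact_stdSimplex ℝ _).prod hPS).inter_right hC).image continuous_fst

theorem isCompact_QdSet (hPS : IsCompact PS) (δ : ℝ) : IsCompact (QdSet P PS W δ) := by
  have hinter : QdSet P PS W δ = compatibleSet P PS W ∩ {q | condMIXY q ≤ δ} :=
    Set.ext fun _ => mem_QdSet_iff
  rw [hinter]
  exact (isCompact_compatibleSet hPS).inter_right (isClosed_le continuous_condMIXY continuous_const)

theorem exists_lt_minInfoX'_QdSet (hPS : IsCompact PS) {δ₀ R : ℝ}
    (hne : (QdSet P PS W δ₀).Nonempty) (hR : R < minInfoX' (QdSet P PS W δ₀)) :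
    ∃ δ > δ₀, R < minInfoX' (QdSet P PS W δ) := by
  have hinter : ⋂ δ : Set.Ioi δ₀, QdSet P PS W δ = QdSet P PS W δ₀ := by
    rw [← Set.biInter_eq_iInter (Set.Ioi δ₀) fun δ _ => QdSet P PS W δ, biInter_Ioi_QdSet]
  have hdirected : Directed (· ⊇ ·) fun δ : Set.Ioi δ₀ => QdSet P PS W δ :=
    Monotone.directed_ge fun _ _ hδ => QdSet_mono hδ
  rw [← hinter] at hne hR
  obtain ⟨⟨δ, hδ⟩, hRδ⟩ := exists_lt_sInf_image_of_directed hdirected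
    (fun δ => isCompact_QdSet hPS δ) hne continuous_infoX'.lowerSemicontinuous hR
  exact ⟨δ, hδ, hRδ⟩

end JointDistributions

theorem QdSet_monotone_inter_and_gap_general
    {A S Y : Type*} [Fintype A] [Fintype S] [Fintype Y]
    (W : A → S → Y → ℝ) (P : A → ℝ) {PS : Set (S → ℝ)} (hPS : IsCompact PS) :
    Monotone (QdSet P PS W) ∧
    (∀ δ₀, ⋂ δ ∈ Set.Ioi δ₀, QdSet P PS W δ = QdSet P PS W δ₀) ∧
    (∀ δ₀ R, (QdSet P PS W δ₀).Nonempty → R < minInfoX' (QdSet P PS W δ₀) →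
      ∃ α > 0, ∃ δ > δ₀, R < minInfoX' (QdSet P PS W δ) - α) := by
  refine ⟨QdSet_mono, biInter_Ioi_QdSet, fun δ₀ R hne hR => ?_⟩
  obtain ⟨δ, hδ, hRδ⟩ := exists_lt_minInfoX'_QdSet hPS hne hR
  obtain ⟨α, hα, hαR⟩ := exists_between (sub_pos.2 hRδ)
  exact ⟨α, hα, δ, hδ, lt_sub_comm.1 hαR⟩

/-- (i) `Q_δ` grows with `δ` and `⋂_{δ > 0} Q_δ = Q_0`;
(ii) if `0 < R < min_{Q_0} I(X'; X, S, Y)`, then there are `α, δ > 0` with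
`R < min_{Q_δ} I(X'; X, S, Y) − α`. -/
theorem QdSet_monotone_inter_and_gap
    {A S Y : Type} [Fintype A] [Fintype S] [Fintype Y]
    (W : A → S → Y → ℝ) (hW : ∀ a s, IsDist (W a s))
    (P : A → ℝ) (hP : IsDist P)
    (PS : Finset (S → ℝ)) (hPS : ∀ p ∈ PS, IsDist p) :
    (∀ δ₁ δ₂ : ℝ, δ₁ ≤ δ₂ → QdSet P (↑PS) W δ₁ ⊆ QdSet P (↑PS) W δ₂) ∧
    (⋂ δ ∈ Set.Ioi (0:ℝ), QdSet P (↑PS) W δ) = QdSet P (↑PS) W 0 ∧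
    (∀ R : ℝ, 0 < R → R < minInfoX' (QdSet P (↑PS) W 0) →
      ∃ α > (0:ℝ), ∃ δ > (0:ℝ), R < minInfoX' (QdSet P (↑PS) W δ) - α) := by
  obtain ⟨hmono, hinter, hgap⟩ := QdSet_monotone_inter_and_gap_general W P PS.finite_toSet.isCompact
  exact ⟨fun _ _ hδ => hmono hδ, hinter 0, fun R hR hRmin =>
    hgap 0 R (nonempty_of_minInfoX'_pos (hR.trans hRmin)) hRmin⟩
end
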